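/- arXiv:2502.00727 — 2 statements merged into one kernel-verified Lean document; each statement's English description precedes it below -/
import Mathlib

section
/- Let T = (T_1, …, T_n) be a Szegő tuple on a complex Hilbert space H, and let i, j ∈ {1, …, n} with i ≠ j. Then T_j maps the defect space 𝒟_{T_i*} into itself, i.e., T_j(𝒟_{T_i*}) ⊆ 𝒟_{T_i*}, where 𝒟_{T_i*} is the closure of the range of D_{T_i*} = (I − T_i T_i*)^{1/2}. -/
/-!
Write `Δ_k(A) = T_k A T_k*`. The alternating sum `𝕊ₙ⁻¹(T, T*)` factors as `∏_k (I − Δ_k)` applied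
to the identity (`szegoInv_eq_applyDelta`), and the factors may be reordered since the `T_k`
commute (`applyDelta_perm`). If `B − T_k B T_k* ≥ 0` then
`⟪B h, h⟫ ≥ ⟪B T_k*ᵐ h, T_k*ᵐ h⟫` for all `m`, and the right side tends to `0` because `T_k` is of
class `C_{·0}`; so `B ≥ 0` (`nonneg_of_sub_conj_nonneg`). Removing in this way the factors with
`k ∉ {i, j}` from the positive operator `𝕊ₙ⁻¹(T, T*)` leaves `Q − T_j Q T_j* ≥ 0` with
`Q = I − T_i T_i* = D²` (`IsSzegoTuple.pair_nonneg`). That inequality reads `‖D T_j* x‖ ≤ ‖D x‖`, so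
`ker D` is invariant under `T_j*`, and its orthogonal complement, the closure of the range of the
self-adjoint operator `D`, is invariant under `T_j`.
-/

open ContinuousLinearMap Filter Topology

variable {H : Type*} [NormedAddCommGroup H] [InnerProductSpace ℂ H] [CompleteSpace H]

/-- `T^k = T 0 ^ k 0 * T 1 ^ k 1 * ⋯` in increasing index order. -/
noncomputable def finPow {n : ℕ} (T : Fin n → H →L[ℂ] H) (k : Fin n → ℕ) : H →L[ℂ] H :=
  ((List.finRange n).map fun i => T i ^ k i).prod

/-- `𝕊ₙ⁻¹(T, T*) = ∑_{k ∈ {0,1}ⁿ} (−1)^{|k|} T^k T^{*k}`. -/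
noncomputable def szegoInv {n : ℕ} (T : Fin n → H →L[ℂ] H) : H →L[ℂ] H :=
  ∑ k : Fin n → Bool,
    ((-1 : ℂ) ^ (∑ i, if k i then 1 else 0)) •
      (finPow T (fun i => if k i then 1 else 0) *
        adjoint (finPow T (fun i => if k i then 1 else 0)))

/-- A Szegő tuple: commuting contractions, `𝕊ₙ⁻¹(T,T*) ≥ 0`, each `Tᵢ` of class `C_{·0}`. -/
structure IsSzegoTuple {n : ℕ} (T : Fin n → H →L[ℂ] H) : Prop where
  comm : ∀ i j, T i * T j = T j * T i
  contraction : ∀ i, ‖T i‖ ≤ 1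
  pos : (szegoInv T).IsPositive
  pure : ∀ i (h : H), Tendsto (fun m : ℕ => (adjoint (T i) ^ m) h) atTop (𝓝 0)

/-- A Beurling tuple: a Szegő tuple with `(I − Tᵢ*Tᵢ)(I − Tⱼ*Tⱼ) = 0` for `i ≠ j`. -/
def IsBeurlingTuple {n : ℕ} (T : Fin n → H →L[ℂ] H) : Prop :=
  IsSzegoTuple T ∧
    ∀ i j, i ≠ j → (1 - adjoint (T i) * T i) * (1 - adjoint (T j) * T j) = 0

/-- Apply `∏_{k ∈ L} (I − Δ_{T k})` to `A`, where `Δ_X(A) = X A X*`. -/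
noncomputable def applyDelta {n : ℕ} (T : Fin n → H →L[ℂ] H) (L : List (Fin n))
    (A : H →L[ℂ] H) : H →L[ℂ] H :=
  L.foldr (fun k B => B - T k * B * adjoint (T k)) A

/-- The truncated defect operator `D²_{j,T,P} = (∏_{k ∈ P} (I − Δ_{T k}))(I − Tⱼ*Tⱼ)`. -/
noncomputable def truncDefectSq {n : ℕ} (T : Fin n → H →L[ℂ] H) (j : Fin n)
    (P : Finset (Fin n)) : H →L[ℂ] H :=
  applyDelta T (P.sort (· ≤ ·)) (1 - adjoint (T j) * T j)

/-- `D²_{j,T} = D²_{j,T,P}` for `P = {1,…,n} \ {j}`. -/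
noncomputable def jointDefectSq {n : ℕ} (T : Fin n → H →L[ℂ] H) (j : Fin n) : H →L[ℂ] H :=
  truncDefectSq T j (Finset.univ.erase j)

/-- The `(i,j)`-th joint commutator `δᵢⱼ(T) = (∏_{k ∉ {i,j}} (I − Δ_{T k}))([Tⱼ, Tᵢ*])`. -/
noncomputable def jointComm {n : ℕ} (T : Fin n → H →L[ℂ] H) (i j : Fin n) : H →L[ℂ] H :=
  applyDelta T (((Finset.univ.erase i).erase j).sort (· ≤ ·))
    (T j * adjoint (T i) - adjoint (T i) * T j)

/-- Extend a multi-index supported on `P` by zero: gives `T_P^α` via `finPow`. -/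
def extendSupport {n : ℕ} (P : Finset (Fin n)) (α : ↥P → ℕ) : Fin n → ℕ :=
  fun i => if h : i ∈ P then α ⟨i, h⟩ else 0

/-- Splitting a sign pattern into its value at `0` and the rest: `I − Δ_{T 0}` factors out. -/
lemma szegoInv_succ {n : ℕ} (T : Fin (n + 1) → H →L[ℂ] H) :
    szegoInv T = szegoInv (fun i => T i.succ)
      - T 0 * szegoInv (fun i => T i.succ) * adjoint (T 0) := by
  have hfin (b : Bool) (k : Fin n → Bool) :
      finPow T (fun i => if (Fin.cons b k : Fin (n + 1) → Bool) i then 1 else 0)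
        = T 0 ^ (if b then 1 else 0) *
          finPow (fun i => T i.succ) (fun i => if k i then 1 else 0) := by
    simp [finPow, List.finRange_succ, Function.comp_def]
  unfold szegoInv
  rw [← (Fin.consEquiv (fun _ : Fin (n + 1) => Bool)).sum_comp, Fintype.sum_prod_type,
    Fintype.sum_bool, Finset.mul_sum, Finset.sum_mul, ← Finset.sum_add_distrib,
    ← Finset.sum_sub_distrib]
  refine Finset.sum_congr rfl fun k _ => ?_
  simp only [Fin.consEquiv_apply, hfin, Fin.sum_univ_succ, Fin.cons_zero, Fin.cons_succ]
  simp only [if_true, Bool.false_eq_true, if_false, pow_one, pow_zero, one_mul, zero_add, pow_add,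
    ← star_eq_adjoint, star_mul, mul_assoc, neg_mul, mul_smul_comm, smul_mul_assoc, neg_smul]
  abel

lemma applyDelta_map_succ {n : ℕ} (T : Fin (n + 1) → H →L[ℂ] H) (L : List (Fin n))
    (A : H →L[ℂ] H) :
    applyDelta T (L.map Fin.succ) A = applyDelta (fun i => T i.succ) L A := by
  simp [applyDelta, List.foldr_map]

/-- The Szegő alternating sum is `∏_k (I − Δ_{T k})` applied to the identity. Keeping the product in
increasing index order, as `finPow` does, makes this true without commutativity. -/
lemma szegoInv_eq_applyDelta : ∀ {n : ℕ} (T : Fin n → H →L[ℂ] H),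
    szegoInv T = applyDelta T (List.finRange n) 1
  | 0, T => by simp [szegoInv, applyDelta, finPow, ← star_eq_adjoint]
  | n + 1, T => by
    rw [szegoInv_succ, szegoInv_eq_applyDelta, List.finRange_succ, ← applyDelta_map_succ]
    rfl

lemma applyDelta_perm {n : ℕ} {T : Fin n → H →L[ℂ] H} (hc : ∀ i j, T i * T j = T j * T i)
    {L L' : List (Fin n)} (h : L.Perm L') (A : H →L[ℂ] H) :
    applyDelta T L A = applyDelta T L' A := by
  have : LeftCommutative (fun (k : Fin n) (B : H →L[ℂ] H) => B - T k * B * adjoint (T k)) := by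
    refine ⟨fun a b B => ?_⟩
    have h2 : adjoint (T b) * adjoint (T a) = adjoint (T a) * adjoint (T b) := by
      simp only [← star_eq_adjoint, ← star_mul, hc a b]
    have h3 : T a * (T b * B * adjoint (T b)) * adjoint (T a)
        = T b * (T a * B * adjoint (T a)) * adjoint (T b) := by
      calc _ = (T a * T b) * B * (adjoint (T b) * adjoint (T a)) := by simp only [mul_assoc]
        _ = (T b * T a) * B * (adjoint (T a) * adjoint (T b)) := by rw [hc a b, h2]
        _ = _ := by simp only [mul_assoc]
    simp only [mul_sub, sub_mul, h3]
    abel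
  exact h.foldr_eq A

/-- A superoperator `I − Δ_X` with `X` of class `C_{·0}` reflects positivity of quadratic forms. -/
lemma nonneg_of_sub_conj_nonneg {X B : H →L[ℂ] H}
    (hX : ∀ h : H, Tendsto (fun m : ℕ => (adjoint X ^ m) h) atTop (𝓝 0))
    (hB : ∀ x, 0 ≤ (B - X * B * adjoint X).reApplyInnerSelf x) (x : H) :
    0 ≤ B.reApplyInnerSelf x := by
  have hstep (y : H) : B.reApplyInnerSelf (adjoint X y) ≤ B.reApplyInnerSelf y := by
    have := hB y
    simp only [reApplyInnerSelf_apply, sub_apply, mul_apply_eq_comp, inner_sub_left, map_sub,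
      ← adjoint_inner_right X] at this ⊢
    linarith
  have hanti : Antitone fun m : ℕ => B.reApplyInnerSelf ((adjoint X ^ m) x) :=
    antitone_nat_of_succ_le fun m => by
      rw [pow_succ']
      exact hstep _
  have hlim : Tendsto (fun m : ℕ => B.reApplyInnerSelf ((adjoint X ^ m) x)) atTop (𝓝 0) := by
    have := (B.reApplyInnerSelf_continuous.tendsto 0).comp (hX x)
    simpa [Function.comp_def, reApplyInnerSelf_apply] using this
  simpa using hanti.le_of_tendsto hlim 0

lemma nonneg_of_applyDelta_nonneg {n : ℕ} {T : Fin n → H →L[ℂ] H}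
    (hT : ∀ i (h : H), Tendsto (fun m : ℕ => (adjoint (T i) ^ m) h) atTop (𝓝 0))
    {A : H →L[ℂ] H} : ∀ L : List (Fin n),
    (∀ x, 0 ≤ (applyDelta T L A).reApplyInnerSelf x) → ∀ x, 0 ≤ A.reApplyInnerSelf x
  | [], h => h
  | k :: L, h => nonneg_of_applyDelta_nonneg hT L (nonneg_of_sub_conj_nonneg (hT k) h)

/-- Each pair from a Szegő tuple satisfies `(I − Δ_{T j})(I − T_i T_i*) ≥ 0`. -/
lemma IsSzegoTuple.pair_nonneg {n : ℕ} {T : Fin n → H →L[ℂ] H} (hT : IsSzegoTuple T)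
    {i j : Fin n} (hij : i ≠ j) (x : H) :
    0 ≤ ((1 - T i * adjoint (T i))
      - T j * (1 - T i * adjoint (T i)) * adjoint (T j)).reApplyInnerSelf x := by
  have hperm : (List.finRange n).Perm ((((List.finRange n).erase j).erase i) ++ [j, i]) := by
    have hj := List.perm_cons_erase (List.mem_finRange j)
    have hi := List.perm_cons_erase
      ((List.mem_erase_of_ne hij).2 (List.mem_finRange i) : i ∈ (List.finRange n).erase j)
    exact (hj.trans (hi.cons j)).trans (List.perm_append_comm (l₁ := [j, i]))
  have hpos := hT.pos.2
  rw [szegoInv_eq_applyDelta, applyDelta_perm hT.comm hperm, applyDelta, List.foldr_append] at hpos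
  simpa using nonneg_of_applyDelta_nonneg hT.pure _ hpos x

/-- For a Szegő tuple `T` and `i ≠ j`, `Tⱼ` maps the defect space
`𝒟_{Tᵢ*}` (the closure of the range of `D_{Tᵢ*} = (I − Tᵢ Tᵢ*)^{1/2}`) into itself. -/
theorem szego_maps_defectStar_into_itself {n : ℕ} (hn : 0 < n) (T : Fin n → H →L[ℂ] H)
    (hT : IsSzegoTuple T) (i j : Fin n) (hij : i ≠ j)
    (D : H →L[ℂ] H) (hDpos : D.IsPositive) (hDsq : D * D = 1 - T i * adjoint (T i)) :
    ⇑(T j) '' closure (Set.range ⇑D) ⊆ closure (Set.range ⇑D) := by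
  have hDsa : adjoint D = D := hDpos.isSelfAdjoint.adjoint_eq
  have hnorm (y : H) : (1 - T i * adjoint (T i)).reApplyInnerSelf y = ‖D y‖ ^ 2 := by
    rw [← hDsq, reApplyInnerSelf_apply, mul_apply_eq_comp, ← adjoint_inner_right D, hDsa,
      inner_self_eq_norm_sq]
  have hker (y : H) (hy : D y = 0) : D (adjoint (T j) y) = 0 := by
    have h1 := hT.pair_nonneg hij y
    have h2 := hnorm y
    have h3 := hnorm (adjoint (T j) y)
    rw [hy, norm_zero] at h2
    rw [reApplyInnerSelf_apply, sub_apply, inner_sub_left, map_sub, mul_apply_eq_comp,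
      mul_apply_eq_comp, ← adjoint_inner_right (T j)] at h1
    rw [reApplyInnerSelf_apply] at h2 h3
    have h4 : ‖D (adjoint (T j) y)‖ ^ 2 ≤ 0 := by linarith
    simpa using le_antisymm h4 (sq_nonneg _)
  have hcl : closure (Set.range ⇑D) = (D.kerᗮ : Set H) := by
    rw [orthogonal_ker, hDsa, Submodule.topologicalClosure_coe]
    rfl
  rw [hcl]
  rintro _ ⟨x, hx, rfl⟩
  refine (Submodule.mem_orthogonal _ _).2 fun y hy => ?_
  rw [← adjoint_inner_left]
  exact (Submodule.mem_orthogonal _ _).1 hx _ (hker y hy)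
end

section
/- Let T = (T_1, …, T_n) be a Beurling tuple on a complex Hilbert space H, let j ∈ {1, …, n}, and let P ⊆ {1, …, n} \ {j}. Then the truncated defect operator D²_{j,T,P} = (∏_{k ∈ P} (I − Δ_{T_k}))(D²_{T_j}) is a positive (semidefinite) operator on H. -/
/-! The tuple is dilated to shifts. Write `D*D` for the positive operator `𝕊ₙ⁻¹(T, T*)`. Since
`𝕊ₙ⁻¹(T, T*) = ∏ᵢ (I - Δ_{T i})(I)` and every `T i` is of class `C_{·0}`, telescoping in one variable
at a time gives `∑_k ‖D T^{*k} h‖² = ‖h‖²` (`tsum_applyDelta`). Hence `W h = (D T^{*k} h)_k` is an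
isometry of `H` into `ℓ²(ℕⁿ, H)` with `M i* W = W T i*`, where the `M i` are the coordinate shifts,
which are doubly commuting isometries.

Let `q = I - W W*`, the projection onto an `M`-invariant subspace, `R k = M k q` the restriction of
the shifts to it, and `Y k = q M k W`. Then `Y k* Y k = I - T k* T k`, so the Beurling condition says
`Y i* Y i Y j* Y j = 0` and therefore `Y i Y j* = 0` for `i ≠ j`. This operator is precisely the
obstruction to double commutativity of `R`, so the `R k` doubly commute. Since
`T k Y j* = Y j* R k` for `k ≠ j`, each `I - Δ_{T k}` can be moved inside, and
`D²_{j,T,P} = Y j* G Y j` with `G = ∏_{k ∈ P} (I - Δ_{R k})(q)` a product of commuting projections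
(`isStarProjection_applyDelta`); hence `D²_{j,T,P} ≥ 0`. -/

open ContinuousLinearMap Filter Topology

variable {H : Type*} [NormedAddCommGroup H] [InnerProductSpace ℂ H] [CompleteSpace H]

/-! ### Positivity from a doubly commuting isometric dilation -/

/-- If the `R k` are doubly commuting isometries on the range of a projection `q`, then
`∏_{k ∈ L} (I - Δ_{R k})` maps `q` to the product of the commuting projections `q - R k (R k)*`,
which is again a projection. The intertwining clause drives the induction on `L`. -/
theorem isStarProjection_applyDelta {K : Type*} [NormedAddCommGroup K] [InnerProductSpace ℂ K]
    [CompleteSpace K] {n : ℕ} (R : Fin n → K →L[ℂ] K) (q : K →L[ℂ] K) (hq : IsStarProjection q)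
    (hqR : ∀ k, q * R k = R k) (hRq : ∀ k, R k * q = R k)
    (hiso : ∀ k, adjoint (R k) * R k = q) (hcomm : ∀ k l, R k * R l = R l * R k)
    (hdc : ∀ k l, k ≠ l → adjoint (R k) * R l = R l * adjoint (R k))
    (L : List (Fin n)) (hL : L.Nodup) :
    IsStarProjection (applyDelta R L q) ∧
      ∀ k, k ∉ L → R k * applyDelta R L q = applyDelta R L q * R k := by
  induction L with
  | nil => exact ⟨hq, fun k _ => by simp [applyDelta, hqR, hRq]⟩
  | cons k L ih =>
    obtain ⟨hk, hL'⟩ := List.nodup_cons.1 hL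
    obtain ⟨hG, hGR⟩ := ih hL'
    set G := applyDelta R L q with hGdef
    have hcons : applyDelta R (k :: L) q = G - R k * G * adjoint (R k) := rfl
    rw [hcons]
    have hGs : adjoint G = G := hG.isSelfAdjoint
    have hGG : G * G = G := hG.isIdempotentElem
    have h1 : R k * G = G * R k := hGR k hk
    have h2 : G * adjoint (R k) = adjoint (R k) * G := by
      have := congrArg star h1
      simpa only [star_mul, star_eq_adjoint, hGs] using this
    -- `E` is the final projection of the partial isometry `R k`.
    set E := R k * adjoint (R k) with hE
    have hEE : E * E = E := by
      calc E * E = R k * (adjoint (R k) * R k) * adjoint (R k) := by simp only [hE, mul_assoc]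
        _ = E := by rw [hiso, hRq]
    have hEs : star E = E := by
      rw [hE, star_mul, star_eq_adjoint, star_eq_adjoint, adjoint_adjoint]
    have hGE : G * E = E * G := by
      rw [hE, ← mul_assoc, ← h1, mul_assoc, h2, mul_assoc]
    have hX : R k * G * adjoint (R k) = G * E := by rw [h1, mul_assoc]
    rw [hX]
    refine ⟨⟨?_, ?_⟩, ?_⟩
    · have e1 : G * (G * E) = G * E := by rw [← mul_assoc, hGG]
      have e2 : G * E * G = G * E := by rw [hGE, mul_assoc, hGG]
      have e3 : G * E * (G * E) = G * E := by rw [← mul_assoc, e2, mul_assoc, hEE]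
      change (G - G * E) * (G - G * E) = G - G * E
      rw [sub_mul, mul_sub, mul_sub, hGG, e1, e2, e3, sub_self, sub_zero]
    · change star (G - G * E) = G - G * E
      rw [star_sub, star_mul, hEs, star_eq_adjoint, hGs, hGE]
    · intro l hl
      obtain ⟨hlk, hlL⟩ : l ≠ k ∧ l ∉ L := by simpa using hl
      have h3 := hGR l hlL
      have h4 : R l * E = E * R l := by
        rw [hE, ← mul_assoc, hcomm l k, mul_assoc, ← hdc k l hlk.symm, mul_assoc]
      rw [mul_sub, sub_mul, h3, ← mul_assoc, h3, mul_assoc, h4, ← mul_assoc]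

/-- If `Y* Y` annihilates `Z* Z` then `Y` annihilates the range of `Z*`. -/
theorem comp_adjoint_eq_zero_of_gram_mul_gram {K : Type*} [NormedAddCommGroup K]
    [InnerProductSpace ℂ K] [CompleteSpace K] (Y Z : H →L[ℂ] K)
    (h : (adjoint Y ∘L Y) * (adjoint Z ∘L Z) = 0) : Y ∘L adjoint Z = 0 := by
  have cancel : ∀ (V : H →L[ℂ] K) (x : H), adjoint V (V x) = 0 → V x = 0 := by
    intro V x hx
    rw [← inner_self_eq_zero (𝕜 := ℂ), ← adjoint_inner_left, hx, inner_zero_left]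
  have h1 : (Y ∘L adjoint Z) ∘L Z = 0 := by
    ext x
    exact cancel Y _ (by simpa using congrArg (fun A : H →L[ℂ] H => A x) h)
  have h2 : adjoint Z ∘L (Z ∘L adjoint Y) = 0 := by
    have := congrArg adjoint h1
    simpa only [adjoint_comp, adjoint_adjoint, map_zero] using this
  have h3 : Z ∘L adjoint Y = 0 := by
    ext x
    exact cancel Z _ (by simpa using congrArg (fun A : K →L[ℂ] H => A x) h2)
  have := congrArg adjoint h3
  simpa only [adjoint_comp, adjoint_adjoint, map_zero] using this

/-- The operator-theoretic core: positivity of the truncated defects of a tuple whose adjoint is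
the restriction, along an isometry `W`, of the adjoint of a doubly commuting tuple of isometries
`M`. Only the orthogonality `(I - Tᵢ*Tᵢ)(I - Tⱼ*Tⱼ) = 0` is asked of `T` itself. -/
theorem truncDefectSq_isPositive_of_dilation {K : Type*} [NormedAddCommGroup K]
    [InnerProductSpace ℂ K] [CompleteSpace K] {n : ℕ} (T : Fin n → H →L[ℂ] H)
    (hort : ∀ i j, i ≠ j → (1 - adjoint (T i) * T i) * (1 - adjoint (T j) * T j) = 0)
    (M : Fin n → K →L[ℂ] K) (W : H →L[ℂ] K) (hW : adjoint W ∘L W = 1)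
    (hWT : ∀ k, adjoint (M k) ∘L W = W ∘L adjoint (T k))
    (hiso : ∀ k, adjoint (M k) * M k = 1) (hcomm : ∀ k l, M k * M l = M l * M k)
    (hdc : ∀ k l, k ≠ l → adjoint (M k) * M l = M l * adjoint (M k))
    (j : Fin n) (P : Finset (Fin n)) (hP : j ∉ P) : (truncDefectSq T j P).IsPositive := by
  have hTW : ∀ k, adjoint W ∘L M k = T k ∘L adjoint W := fun k => by
    have := congrArg adjoint (hWT k)
    simpa only [adjoint_comp, adjoint_adjoint] using this
  have hW' : ∀ x, adjoint W (W x) = x := fun x => congrArg (fun A : H →L[ℂ] H => A x) hW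
  have hWT' : ∀ k x, adjoint (M k) (W x) = W (adjoint (T k) x) := fun k x =>
    congrArg (fun A : H →L[ℂ] K => A x) (hWT k)
  have hTW' : ∀ k x, adjoint W (M k x) = T k (adjoint W x) := fun k x =>
    congrArg (fun A : K →L[ℂ] H => A x) (hTW k)
  have hiso' : ∀ k x, adjoint (M k) (M k x) = x := fun k x =>
    congrArg (fun A : K →L[ℂ] K => A x) (hiso k)
  have hcomm' : ∀ k l x, M k (M l x) = M l (M k x) := fun k l x =>
    congrArg (fun A : K →L[ℂ] K => A x) (hcomm k l)
  have hdc' : ∀ k l x, k ≠ l → adjoint (M k) (M l x) = M l (adjoint (M k) x) := fun k l x h =>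
    congrArg (fun A : K →L[ℂ] K => A x) (hdc k l h)
  -- `q` is the projection onto the `M`-invariant orthocomplement of the range of `W`.
  obtain ⟨q, hqdef⟩ : ∃ q : K →L[ℂ] K, q = 1 - W ∘L adjoint W := ⟨_, rfl⟩
  have hq : ∀ x, q x = x - W (adjoint W x) := fun x => by simp [hqdef]
  have hqs : adjoint q = q := by
    rw [hqdef, map_sub, adjoint_comp, adjoint_adjoint, ← star_eq_adjoint, star_one]
  have hqq : q * q = q := by
    ext x; simp [hq, hW']
  have hqMq : ∀ k x, q (M k (q x)) = M k (q x) := fun k x => by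
    simp [hq, hW', hTW']
  -- `R` is the restriction of `M` to the range of `q`, extended by `0`.
  obtain ⟨R, hR⟩ : ∃ R : Fin n → K →L[ℂ] K, ∀ k, R k = M k * q := ⟨_, fun _ => rfl⟩
  have hRa : ∀ k, adjoint (R k) = q * adjoint (M k) := fun k => by
    rw [hR, ← star_eq_adjoint, star_mul, star_eq_adjoint, star_eq_adjoint, hqs]
  -- `Y k` is a square root of the defect: `(Y k)* Y k = I - T k* T k`.
  obtain ⟨Y, hY⟩ : ∃ Y : Fin n → H →L[ℂ] K, ∀ k, Y k = q ∘L M k ∘L W := ⟨_, fun _ => rfl⟩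
  have hYa : ∀ k, adjoint (Y k) = adjoint W ∘L adjoint (M k) ∘L q := fun k => by
    rw [hY, adjoint_comp, adjoint_comp, hqs, comp_assoc]
  have hYY : ∀ k, adjoint (Y k) ∘L Y k = 1 - adjoint (T k) * T k := fun k => by
    rw [hYa, hY]
    ext x
    simp [hq, hW', hTW', hWT', hiso']
  have hYY0 : ∀ k l, k ≠ l → Y k ∘L adjoint (Y l) = 0 := fun k l h =>
    comp_adjoint_eq_zero_of_gram_mul_gram _ _ (by rw [hYY, hYY, hort k l h])
  have hqP : IsStarProjection q := ⟨hqq, hqs⟩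
  have hqq' : ∀ x, q (q x) = q x := fun x => congrArg (fun A : K →L[ℂ] K => A x) hqq
  obtain ⟨hG, -⟩ := isStarProjection_applyDelta R q hqP
    (fun k => by ext x; simp [hR, hqMq])
    (fun k => by rw [hR, mul_assoc, hqq])
    (fun k => by rw [hRa, hR]; ext x; simp [hiso', hqq'])
    (fun k l => by ext x; simp only [hR, mul_apply_eq_comp, hqMq]; exact hcomm' k l _)
    (fun k l h => by
      ext x
      -- `(R k)* R l - R l (R k)*` equals `Y l ∘ (Y k)*`, which vanishes by orthogonality.
      have h0 : Y l (adjoint (Y k) x) = 0 :=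
        congrArg (fun A : K →L[ℂ] K => A x) (hYY0 l k h.symm)
      have h1 : q (M l (W (adjoint W (adjoint (M k) (q x))))) = 0 := by
        rw [hYa, hY] at h0
        exact h0
      have h2 : q (M l (adjoint (M k) (q x))) = M l (q (adjoint (M k) (q x))) := by
        rw [← hqMq, hq (adjoint (M k) (q x)), map_sub, map_sub, h1, sub_zero]
      have h3 : q (adjoint (M k) (q x)) = q (adjoint (M k) x) := by
        simp [hq, hWT', hW']
      rw [hRa, hR]
      simp only [mul_apply_eq_comp]
      rw [hdc' k l _ h, h2, h3, hqq'])
    (P.sort (· ≤ ·)) (P.sort_nodup _)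
  -- `(Y j)*` intertwines `R k` and `T k` for `k ≠ j`.
  have hTY : ∀ k, k ≠ j → T k ∘L adjoint (Y j) = adjoint (Y j) ∘L R k := fun k hk => by
    ext x
    simp only [hYa, hR, ContinuousLinearMap.comp_apply, mul_apply_eq_comp, comp_apply, hqMq]
    rw [hdc' j k _ hk.symm, hTW']
  have hpush : ∀ L : List (Fin n), j ∉ L → applyDelta T L (1 - adjoint (T j) * T j) =
      adjoint (Y j) ∘L applyDelta R L q ∘L Y j := by
    intro L
    induction L with
    | nil =>
      intro _
      change 1 - adjoint (T j) * T j = adjoint (Y j) ∘L q ∘L Y j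
      rw [← hYY]
      ext x
      simp [hY, hqq']
    | cons k L ih =>
      intro hj
      obtain ⟨hjk, hjL⟩ : j ≠ k ∧ j ∉ L := by simpa using hj
      change applyDelta T L _ - T k * applyDelta T L _ * adjoint (T k) =
        adjoint (Y j) ∘L (applyDelta R L q - R k * applyDelta R L q * adjoint (R k)) ∘L Y j
      have e1 := hTY k hjk.symm
      have e2 : Y j ∘L adjoint (T k) = adjoint (R k) ∘L Y j := by
        have := congrArg adjoint e1
        simpa only [adjoint_comp, adjoint_adjoint] using this
      have e1' : ∀ x, T k (adjoint (Y j) x) = adjoint (Y j) (R k x) := fun x =>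
        congrArg (fun A : K →L[ℂ] H => A x) e1
      have e2' : ∀ x, Y j (adjoint (T k) x) = adjoint (R k) (Y j x) := fun x =>
        congrArg (fun A : H →L[ℂ] K => A x) e2
      rw [ih hjL]
      ext x
      simp [e1', e2']
  rw [truncDefectSq, hpush _ (by simpa using hP)]
  exact (IsPositive.of_isStarProjection hG).adjoint_conj (Y j)

/-! ### Shifts on `ℓ²(ι, H)` -/

section Shift

variable {ι : Type*}

theorem summable_norm_sq {G : Type*} [NormedAddCommGroup G]
    (f : lp (fun _ : ι => G) 2) : Summable fun a => ‖f a‖ ^ 2 := by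
  have := (memℓp_gen_iff (p := 2) (by norm_num)).1 (lp.memℓp f)
  simpa using this

theorem norm_sq_eq_tsum {G : Type*} [NormedAddCommGroup G]
    (f : lp (fun _ : ι => G) 2) : ‖f‖ ^ 2 = ∑' a, ‖f a‖ ^ 2 := by
  have := lp.norm_rpow_eq_tsum (p := 2) (by norm_num) f
  simpa using this

theorem memℓp_two_of_summable {G : Type*} [NormedAddCommGroup G] {f : ι → G} (hf : Summable fun a => ‖f a‖ ^ 2) :
    Memℓp (E := fun _ : ι => G) f 2 :=
  (memℓp_gen_iff (p := 2) (by norm_num)).2 (by simpa using hf)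

/-- The backward shift `f ↦ f ∘ e` on `ℓ²(ι, H)` along an injective map `e`. -/
noncomputable def backShift (e : ι → ι) (he : Function.Injective e) :
    lp (fun _ : ι => H) 2 →L[ℂ] lp (fun _ : ι => H) 2 :=
  LinearMap.mkContinuous
    { toFun := fun f => ⟨fun a => f (e a),
        memℓp_two_of_summable ((summable_norm_sq f).comp_injective he)⟩
      map_add' := fun _ _ => rfl
      map_smul' := fun _ _ => rfl } 1 fun f => by
    rw [one_mul]
    refine le_of_sq_le_sq ?_ (norm_nonneg _)
    rw [norm_sq_eq_tsum, norm_sq_eq_tsum]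
    exact tsum_comp_le_tsum_of_inj (summable_norm_sq f) (fun _ => sq_nonneg _) he

theorem backShift_apply (e : ι → ι) (he : Function.Injective e) (f : lp (fun _ : ι => H) 2)
    (a : ι) : backShift e he f a = f (e a) := rfl

/-- The adjoint of `backShift e` is the forward shift, moving the entry at `a` to `e a` and
(by `adjoint_backShift_apply_of_notMem`) filling up with zeros. -/
theorem adjoint_backShift_apply (e : ι → ι) (he : Function.Injective e)
    (f : lp (fun _ : ι => H) 2) (a : ι) : adjoint (backShift e he) f (e a) = f a := by
  classical
  refine ext_inner_right ℂ fun v => ?_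
  rw [← lp.inner_single_right, adjoint_inner_left]
  have : backShift e he (lp.single 2 (e a) v) = lp.single 2 a v := by
    ext b
    rw [backShift_apply, lp.single_apply, lp.single_apply]
    by_cases h : b = a
    · subst h; simp
    · rw [Pi.single_eq_of_ne h, Pi.single_eq_of_ne (fun h' => h (he h'))]
  rw [this, lp.inner_single_right]

theorem adjoint_backShift_apply_of_notMem (e : ι → ι) (he : Function.Injective e)
    (f : lp (fun _ : ι => H) 2) (b : ι) (hb : b ∉ Set.range e) :
    adjoint (backShift e he) f b = 0 := by
  classical
  refine ext_inner_right ℂ fun v => ?_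
  rw [← lp.inner_single_right, adjoint_inner_left]
  have : backShift e he (lp.single 2 b v) = 0 := by
    ext c
    rw [backShift_apply, lp.single_apply, Pi.single_eq_of_ne (fun h => hb ⟨c, h⟩)]
    rfl
  rw [this, inner_zero_right, inner_zero_left]

theorem backShift_mul_adjoint_self (e : ι → ι) (he : Function.Injective e) :
    (backShift e he : lp (fun _ : ι => H) 2 →L[ℂ] lp (fun _ : ι => H) 2) *
      adjoint (backShift e he) = 1 := by
  ext f a
  exact adjoint_backShift_apply e he f a

theorem backShift_mul_comm (e e' : ι → ι) (he : Function.Injective e)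
    (he' : Function.Injective e') (hc : ∀ a, e (e' a) = e' (e a)) :
    (backShift e he : lp (fun _ : ι => H) 2 →L[ℂ] lp (fun _ : ι => H) 2) * backShift e' he' =
      backShift e' he' * backShift e he := by
  ext f a
  exact congrArg f (hc a).symm

theorem backShift_mul_adjoint_comm (e e' : ι → ι) (he : Function.Injective e)
    (he' : Function.Injective e') (hc : ∀ a, e (e' a) = e' (e a))
    (hr : ∀ a, e a ∈ Set.range e' → a ∈ Set.range e') :
    (backShift e he : lp (fun _ : ι => H) 2 →L[ℂ] lp (fun _ : ι => H) 2) *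
      adjoint (backShift e' he' : lp (fun _ : ι => H) 2 →L[ℂ] lp (fun _ : ι => H) 2) =
        adjoint (backShift e' he' : lp (fun _ : ι => H) 2 →L[ℂ] lp (fun _ : ι => H) 2) *
          backShift e he := by
  ext f a
  change adjoint (backShift e' he') f (e a) = adjoint (backShift e' he') (backShift e he f) a
  by_cases ha : a ∈ Set.range e'
  · obtain ⟨b, rfl⟩ := ha
    rw [hc, adjoint_backShift_apply, adjoint_backShift_apply, backShift_apply]
  · rw [adjoint_backShift_apply_of_notMem _ _ _ _ ha,
      adjoint_backShift_apply_of_notMem _ _ _ _ (fun h => ha (hr a h))]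

end Shift

/-! ### Summing the iterated defect operators -/

/-- One-variable step: `⟨(B - X B X*) X*ᵐ h, X*ᵐ h⟩` telescopes in `m`, and the remainder
`⟨B X*ᵐ h, X*ᵐ h⟩` tends to `0` because `X` is of class `C_{·0}`. The sum is taken in `ℝ≥0∞` so
that the variables can be summed in any order. -/
theorem isPositive_and_tsum_of_sub_conj (X B : H →L[ℂ] H) (hB : IsSelfAdjoint B)
    (hpos : (B - X * B * adjoint X).IsPositive)
    (hpure : ∀ h : H, Tendsto (fun m : ℕ => (adjoint X ^ m) h) atTop (𝓝 0)) :
    B.IsPositive ∧ ∀ h : H,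
      ∑' m : ℕ, ENNReal.ofReal ((B - X * B * adjoint X).reApplyInnerSelf ((adjoint X ^ m) h)) =
        ENNReal.ofReal (B.reApplyInnerSelf h) := by
  have hterm : ∀ (h : H) (m : ℕ),
      (B - X * B * adjoint X).reApplyInnerSelf ((adjoint X ^ m) h) =
        B.reApplyInnerSelf ((adjoint X ^ m) h) -
          B.reApplyInnerSelf ((adjoint X ^ (m + 1)) h) := by
    intro h m
    rw [pow_succ']
    simp [reApplyInnerSelf_apply, inner_sub_left, ← adjoint_inner_right]
  have hnn : ∀ (h : H) (m : ℕ),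
      0 ≤ (B - X * B * adjoint X).reApplyInnerSelf ((adjoint X ^ m) h) := fun h m =>
    hpos.re_inner_nonneg_left _
  have hsum : ∀ h : H, HasSum
      (fun m => (B - X * B * adjoint X).reApplyInnerSelf ((adjoint X ^ m) h))
      (B.reApplyInnerSelf h) := by
    intro h
    rw [hasSum_iff_tendsto_nat_of_nonneg (hnn h)]
    simp_rw [hterm, Finset.sum_range_sub']
    have h1 : Tendsto (fun m : ℕ => B.reApplyInnerSelf ((adjoint X ^ m) h)) atTop (𝓝 0) := by
      have := (B.reApplyInnerSelf_continuous.tendsto 0).comp (hpure h)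
      simpa [Function.comp_def, reApplyInnerSelf_apply] using this
    simpa using h1.const_sub (B.reApplyInnerSelf h)
  refine ⟨isPositive_def'.2 ⟨hB, fun h => (hsum h).nonneg (hnn h)⟩, fun h => ?_⟩
  rw [← ENNReal.ofReal_tsum_of_nonneg (hnn h) (hsum h).summable, (hsum h).tsum_eq]

theorem applyDelta_finRange_succ {n : ℕ} (T : Fin (n + 1) → H →L[ℂ] H) (A : H →L[ℂ] H) :
    applyDelta T (List.finRange (n + 1)) A =
      applyDelta (fun i => T (Fin.succ i)) (List.finRange n) A -
        T 0 * applyDelta (fun i => T (Fin.succ i)) (List.finRange n) A * adjoint (T 0) := by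
  simp only [applyDelta, List.finRange_succ, List.foldr_cons, List.foldr_map]

theorem finPow_succ {n : ℕ} (T : Fin (n + 1) → H →L[ℂ] H) (k : Fin (n + 1) → ℕ) :
    finPow T k = T 0 ^ k 0 * finPow (fun i => T (Fin.succ i)) (fun i => k (Fin.succ i)) := by
  simp [finPow, List.finRange_succ, Function.comp_def]

theorem commute_finPow {n : ℕ} (T : Fin n → H →L[ℂ] H) (X : H →L[ℂ] H)
    (hX : ∀ i, Commute X (T i)) (k : Fin n → ℕ) : Commute X (finPow T k) := by
  refine Commute.list_prod_right _ _ fun y hy => ?_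
  obtain ⟨i, -, rfl⟩ := List.mem_map.1 hy
  exact (hX i).pow_right _

theorem isSelfAdjoint_applyDelta {n : ℕ} (T : Fin n → H →L[ℂ] H) (L : List (Fin n))
    (A : H →L[ℂ] H) (hA : IsSelfAdjoint A) : IsSelfAdjoint (applyDelta T L A) := by
  induction L with
  | nil => exact hA
  | cons k L ih => exact ih.sub (ih.conjugate (T k))

/-- The multivariable version: `∑_k ⟨B T^{*k} h, T^{*k} h⟩ = ⟨A h, h⟩` for
`B = ∏ᵢ (I - Δ_{T i}) (A) ≥ 0`. Summing over the first exponent peels off the factor `I - Δ_{T 0}`,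
and also gives the positivity needed for the remaining variables. -/
theorem tsum_applyDelta {n : ℕ} (T : Fin n → H →L[ℂ] H) (hcomm : ∀ i j, T i * T j = T j * T i)
    (hpure : ∀ i (h : H), Tendsto (fun m : ℕ => (adjoint (T i) ^ m) h) atTop (𝓝 0))
    (A : H →L[ℂ] H) (hA : IsSelfAdjoint A)
    (hpos : (applyDelta T (List.finRange n) A).IsPositive) (h : H) :
    ∑' k : Fin n → ℕ, ENNReal.ofReal
        ((applyDelta T (List.finRange n) A).reApplyInnerSelf (adjoint (finPow T k) h)) =
      ENNReal.ofReal (A.reApplyInnerSelf h) := by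
  induction n with
  | zero =>
    rw [tsum_fintype, Fintype.sum_unique]
    simp [finPow, applyDelta, ← star_eq_adjoint]
  | succ n ih =>
    set T' : Fin n → H →L[ℂ] H := fun i => T (Fin.succ i) with hT'
    rw [applyDelta_finRange_succ] at hpos ⊢
    obtain ⟨hB, hone⟩ := isPositive_and_tsum_of_sub_conj (T 0) _
      (isSelfAdjoint_applyDelta T' _ A hA) hpos (hpure 0)
    rw [← ih T' (fun i j => hcomm _ _) (fun i => hpure _) hB,
      ← (Fin.consEquiv fun _ => ℕ).tsum_eq, ENNReal.tsum_prod', ENNReal.tsum_comm]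
    refine tsum_congr fun k => ?_
    rw [← hone]
    refine tsum_congr fun m => ?_
    have : adjoint (finPow T (Fin.cons m k)) = adjoint (T 0) ^ m * adjoint (finPow T' k) := by
      rw [finPow_succ, Fin.cons_zero]
      simp only [Fin.cons_succ]
      rw [((commute_finPow T' (T 0) (fun i => hcomm _ _) k).pow_left m).eq]
      simp only [← star_eq_adjoint, star_mul, star_pow, hT']
    change ENNReal.ofReal (reApplyInnerSelf _ (adjoint (finPow T (Fin.cons m k)) h)) = _
    rw [this, mul_apply_eq_comp]

/-- Expanding `∏ᵢ (I - Δ_{T i})` over the subsets of the variables. -/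
theorem szego_sum_eq_applyDelta {n : ℕ} (T : Fin n → H →L[ℂ] H)
    (hcomm : ∀ i j, T i * T j = T j * T i) :
    szegoInv T = applyDelta T (List.finRange n) 1 := by
  induction n with
  | zero => simp [szegoInv, finPow, applyDelta, ← star_eq_adjoint]
  | succ n ih =>
    rw [applyDelta_finRange_succ, ← ih _ (fun i j => hcomm _ _), szegoInv,
      ← (Fin.consEquiv fun _ => Bool).sum_comp, Fintype.sum_prod_type, Fintype.sum_bool,
      add_comm, sub_eq_add_neg]
    congr 1
    · refine Finset.sum_congr rfl fun k _ => ?_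
      simp [finPow_succ, Fin.consEquiv, Fin.sum_univ_succ]
    · rw [szegoInv, Finset.mul_sum, Finset.sum_mul, ← Finset.sum_neg_distrib]
      refine Finset.sum_congr rfl fun k _ => ?_
      simp only [finPow_succ, Fin.consEquiv, Fin.sum_univ_succ, Equiv.coe_fn_mk, Fin.cons_zero,
        Fin.cons_succ, if_true, pow_add, pow_one, neg_mul, one_mul, neg_smul, mul_smul_comm,
        smul_mul_assoc, ← star_eq_adjoint, star_mul, mul_assoc]

theorem finPow_add_single {n : ℕ} (T : Fin n → H →L[ℂ] H)
    (hcomm : ∀ i j, T i * T j = T j * T i) (k : Fin n → ℕ) (i : Fin n) :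
    finPow T (k + Pi.single i 1) = T i * finPow T k := by
  induction n with
  | zero => exact i.elim0
  | succ n ih =>
    rw [finPow_succ, finPow_succ]
    induction i using Fin.cases with
    | zero => simp [pow_succ', mul_assoc]
    | succ i =>
      have := ih (fun i => T (Fin.succ i)) (fun i j => hcomm _ _) (fun i => k (Fin.succ i)) i
      have h2 : (fun a => (k + Pi.single (Fin.succ i) 1 : Fin (n + 1) → ℕ) (Fin.succ a)) =
          (fun a => k (Fin.succ a)) + Pi.single i 1 := by
        ext a
        simp [Pi.single_apply]
      have hc : Commute (T 0 ^ k 0) (T (Fin.succ i)) :=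
        Commute.pow_left (hcomm 0 (Fin.succ i)) _
      rw [h2, this, ← mul_assoc, ← mul_assoc]
      simp [hc.eq]

/-! ### The Szegő dilation and the positivity theorem -/

/-- For a Beurling tuple `T`, `j`, and `P ⊆ {1,…,n} \ {j}`, the truncated
defect operator `D²_{j,T,P}` is positive. -/
theorem beurling_truncDefectSq_isPositive {n : ℕ} (hn : 0 < n) (T : Fin n → H →L[ℂ] H)
    (hT : IsBeurlingTuple T) (j : Fin n) (P : Finset (Fin n)) (hP : j ∉ P) :
    (truncDefectSq T j P).IsPositive := by
  obtain ⟨⟨hcomm, -, hS, hpure⟩, hort⟩ := hT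
  rw [szego_sum_eq_applyDelta T hcomm] at hS
  obtain ⟨D, hD⟩ := CStarAlgebra.nonneg_iff_eq_star_mul_self.1
    ((nonneg_iff_isPositive _).2 hS)
  -- `D` is a square root of the Szegő defect; `h ↦ (D T^{*k} h)_k` is the Szegő dilation.
  have hsum : ∀ h : H, ∑' k : Fin n → ℕ, ENNReal.ofReal (‖D (adjoint (finPow T k) h)‖ ^ 2) =
      ENNReal.ofReal (‖h‖ ^ 2) := by
    intro h
    have := tsum_applyDelta T hcomm hpure 1 (IsSelfAdjoint.one _) hS h
    have h1 : ∀ x : H, (star D * D).reApplyInnerSelf x = ‖D x‖ ^ 2 := fun x => by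
      rw [reApplyInnerSelf_apply, mul_apply_eq_comp, star_eq_adjoint, adjoint_inner_left,
        inner_self_eq_norm_sq]
    have h2 : (1 : H →L[ℂ] H).reApplyInnerSelf h = ‖h‖ ^ 2 := by
      rw [reApplyInnerSelf_apply, one_apply_eq_self, inner_self_eq_norm_sq]
    simpa only [hD, h1, h2] using this
  have hsummable : ∀ h : H, Summable fun k : Fin n → ℕ => ‖D (adjoint (finPow T k) h)‖ ^ 2 := by
    intro h
    have := ENNReal.summable_toReal (f := fun k : Fin n → ℕ =>
      ENNReal.ofReal (‖D (adjoint (finPow T k) h)‖ ^ 2)) (by rw [hsum]; exact ENNReal.ofReal_ne_top)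
    simpa [ENNReal.toReal_ofReal] using this
  let W₀ : H →ₗ[ℂ] lp (fun _ : Fin n → ℕ => H) 2 :=
    { toFun := fun h => ⟨fun k => D (adjoint (finPow T k) h), memℓp_two_of_summable (hsummable h)⟩
      map_add' := fun x y => by ext k; simp; rfl
      map_smul' := fun c x => by ext k; simp }
  have hnorm : ∀ h, ‖W₀ h‖ = ‖h‖ := by
    intro h
    have h1 : ‖W₀ h‖ ^ 2 = ‖h‖ ^ 2 := by
      rw [norm_sq_eq_tsum]
      change ∑' k : Fin n → ℕ, ‖D (adjoint (finPow T k) h)‖ ^ 2 = _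
      have := hsum h
      rwa [← ENNReal.ofReal_tsum_of_nonneg (fun _ => sq_nonneg _) (hsummable h),
        ENNReal.ofReal_eq_ofReal_iff (tsum_nonneg fun _ => sq_nonneg _) (sq_nonneg _)] at this
    exact (sq_eq_sq₀ (norm_nonneg _) (norm_nonneg _)).1 h1
  let W : H →L[ℂ] lp (fun _ : Fin n → ℕ => H) 2 :=
    W₀.mkContinuous 1 fun h => by rw [hnorm, one_mul]
  let e : Fin n → (Fin n → ℕ) → (Fin n → ℕ) := fun i k => k + Pi.single i 1
  have he : ∀ i, Function.Injective (e i) := fun i => add_left_injective _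
  have hec : ∀ i l a, e i (e l a) = e l (e i a) := fun i l a => add_right_comm _ _ _
  have her : ∀ i l, i ≠ l → ∀ a, e i a ∈ Set.range (e l) → a ∈ Set.range (e l) := by
    rintro i l hil a ⟨b, hb⟩
    have hl : a l = b l + 1 := by
      have := congrFun hb l
      simpa [e, hil.symm] using this.symm
    refine ⟨a - Pi.single l 1, ?_⟩
    refine tsub_add_cancel_of_le fun x => ?_
    by_cases hx : x = l
    · subst hx; simp [hl]
    · simp [hx]
  refine truncDefectSq_isPositive_of_dilation T hort
    (fun i => adjoint (backShift (e i) (he i))) W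
    ((norm_map_iff_adjoint_comp_self W).1 hnorm) (fun i => ?_) (fun i => ?_) (fun i l => ?_)
    (fun i l hil => ?_) j P hP
  · rw [adjoint_adjoint]
    ext h k
    change D (adjoint (finPow T (k + Pi.single i 1)) h) = D (adjoint (finPow T k) (adjoint (T i) h))
    rw [finPow_add_single T hcomm, ← star_eq_adjoint, star_mul]
    rfl
  · rw [adjoint_adjoint]
    exact backShift_mul_adjoint_self _ _
  · have := congrArg star (backShift_mul_comm (H := H) (e l) (e i) (he l) (he i) (hec l i))
    simpa only [star_mul, star_eq_adjoint] using this
  · rw [adjoint_adjoint]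
    exact backShift_mul_adjoint_comm _ _ _ _ (hec i l) (her i l hil)
end
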